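/- Let C1 ⊆ F_{q^m}^n be a linear code and C2 ⊊ C1 a subcode. Then the i-th RDIP K_{R,i}(C1,C2) satisfies K_{R,0}(C1,C2) = 0, K_{R,n}(C1,C2) = dim C1 − dim C2, K_{R,i}(C1,C2) is nondecreasing in i, and 0 ≤ K_{R,i+1}(C1,C2) − K_{R,i}(C1,C2) ≤ 1 for all 0 ≤ i ≤ n−1. -/

import Mathlib

open scoped BigOperators

noncomputable section

variable (q : ℕ) (Fq : Type*) {Fqm : Type*} [Field Fq] [Field Fqm] [Algebra Fq Fqm]

/-- `V = V^q`: the image of `V` under the coordinatewise `q`-th power map equals `V`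
(membership in the family `Γ(F_{q^m}^n)`). -/
def IsGalClosed {n : ℕ} (V : Submodule Fqm (Fin n → Fqm)) : Prop :=
  (fun v : Fin n → Fqm => fun i => v i ^ q) '' (V : Set (Fin n → Fqm)) =
    (V : Set (Fin n → Fqm))

/-- The `i`-th relative dimension/intersection profile (RDIP) of `C1` and `C2`. -/
noncomputable def RDIP {n : ℕ} (C1 C2 : Submodule Fqm (Fin n → Fqm)) (i : ℕ) : ℕ :=
  sSup {d : ℕ | ∃ V : Submodule Fqm (Fin n → Fqm), IsGalClosed q V ∧
    Module.finrank Fqm ↥V = i ∧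
    d = Module.finrank Fqm ↥(C1 ⊓ V) - Module.finrank Fqm ↥(C2 ⊓ V)}

/-- The `i`-th relative generalized rank weight (RGRW) of `C1` and `C2`. -/
noncomputable def RGRW {n : ℕ} (C1 C2 : Submodule Fqm (Fin n → Fqm)) (i : ℕ) : ℕ :=
  sInf {d : ℕ | ∃ V : Submodule Fqm (Fin n → Fqm), IsGalClosed q V ∧
    d = Module.finrank Fqm ↥V ∧
    i ≤ Module.finrank Fqm ↥(C1 ⊓ V) - Module.finrank Fqm ↥(C2 ⊓ V)}

/-- The rank weight `d_R(x,0)` of a vector: the `F_q`-dimension of the `F_q`-span of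
its coordinates. -/
noncomputable def rankWeight {ι : Type*} (x : ι → Fqm) : ℕ :=
  Module.finrank Fq ↥(Submodule.span Fq (Set.range x))

/-- The minimum rank distance of a (nonzero) linear code. -/
noncomputable def minRankDist {ι : Type*} (C : Submodule Fqm (ι → Fqm)) : ℕ :=
  sInf {d : ℕ | ∃ x, x ∈ C ∧ x ≠ 0 ∧ d = rankWeight Fq x}

/-- The dual code with respect to the standard bilinear form `⟨x,y⟩ = ∑ i, x i * y i`. -/
def dualCode {n : ℕ} (V : Submodule Fqm (Fin n → Fqm)) : Submodule Fqm (Fin n → Fqm) where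
  carrier := {x | ∀ v ∈ V, ∑ i, x i * v i = 0}
  add_mem' := by
    intro a b ha hb v hv
    have h1 := ha v hv
    have h2 := hb v hv
    simp only [Set.mem_setOf_eq] at *
    simp only [Pi.add_apply, add_mul]
    rw [Finset.sum_add_distrib, h1, h2, add_zero]
  zero_mem' := by
    intro v hv
    simp
  smul_mem' := by
    intro c x hx v hv
    have h := hx v hv
    simp only [Set.mem_setOf_eq] at *
    simp only [Pi.smul_apply, smul_eq_mul, mul_assoc]
    rw [← Finset.mul_sum, h, mul_zero]


/-!
A subspace stable under the Frobenius that is not everything misses a unit vector, and adjoining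
that vector gives a stable subspace of dimension one more; a nonzero stable subspace is not
contained in some coordinate hyperplane, and intersecting with that hyperplane gives a stable
subspace of dimension one less. On the other hand `dim (C1 ∩ V) - dim (C2 ∩ V)` is nondecreasing
in `V` and, by the modular law for dimensions, grows at most as fast as `dim V`. Hence a maximizer
in dimension `i` can be enlarged, and a maximizer in dimension `i + 1` can be shrunk.
-/

section RelInterDim

variable {K E : Type*} [DivisionRing K] [AddCommGroup E] [Module K E]

/-- The relative intersection dimension `dim (C1 ∩ V) - dim (C2 ∩ V)` of a subspace `V` with a pair
of codes: the quantity maximized by the RDIP. The subtraction is truncated, which loses nothing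
when `C2 ≤ C1`. -/
def relInterDim (C1 C2 V : Submodule K E) : ℕ :=
  Module.finrank K ↥(C1 ⊓ V) - Module.finrank K ↥(C2 ⊓ V)

theorem relInterDim_top (C1 C2 : Submodule K E) :
    relInterDim C1 C2 ⊤ = Module.finrank K C1 - Module.finrank K C2 := by
  rw [relInterDim, inf_top_eq, inf_top_eq]

variable [Module.Finite K E]

theorem relInterDim_le_finrank_left (C1 C2 V : Submodule K E) :
    relInterDim C1 C2 V ≤ Module.finrank K C1 :=
  (Nat.sub_le _ _).trans (Submodule.finrank_mono inf_le_left)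

theorem relInterDim_le_finrank_right (C1 C2 V : Submodule K E) :
    relInterDim C1 C2 V ≤ Module.finrank K V :=
  (Nat.sub_le _ _).trans (Submodule.finrank_mono inf_le_right)

theorem relInterDim_mono {C1 C2 : Submodule K E} (h : C2 ≤ C1) : Monotone (relInterDim C1 C2) := by
  intro W V hWV
  have h_inf : (C1 ⊓ W) ⊓ (C2 ⊓ V) = C2 ⊓ W := by
    rw [inf_inf_inf_comm, inf_eq_right.2 h, inf_eq_left.2 hWV]
  have h_sup : Module.finrank K ↥((C1 ⊓ W) ⊔ (C2 ⊓ V)) ≤ Module.finrank K ↥(C1 ⊓ V) :=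
    Submodule.finrank_mono (sup_le (inf_le_inf_left _ hWV) (inf_le_inf_right _ h))
  have h_add := Submodule.finrank_sup_add_finrank_inf_eq (C1 ⊓ W) (C2 ⊓ V)
  rw [h_inf] at h_add
  unfold relInterDim
  omega

theorem relInterDim_add_finrank_le (C1 C2 : Submodule K E) {W V : Submodule K E} (hWV : W ≤ V) :
    relInterDim C1 C2 V + Module.finrank K W ≤ relInterDim C1 C2 W + Module.finrank K V := by
  have h_inf : (C1 ⊓ V) ⊓ W = C1 ⊓ W := by rw [inf_assoc, inf_eq_right.2 hWV]
  have h_sup : Module.finrank K ↥((C1 ⊓ V) ⊔ W) ≤ Module.finrank K V :=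
    Submodule.finrank_mono (sup_le inf_le_right hWV)
  have h_add := Submodule.finrank_sup_add_finrank_inf_eq (C1 ⊓ V) W
  have h_le : Module.finrank K W ≤ Module.finrank K V := Submodule.finrank_mono hWV
  have h_C2 : Module.finrank K ↥(C2 ⊓ W) ≤ Module.finrank K ↥(C2 ⊓ V) :=
    Submodule.finrank_mono (inf_le_inf_left _ hWV)
  rw [h_inf] at h_add
  unfold relInterDim
  omega

end RelInterDim

section Coordinates

variable {K ι : Type*} [Semiring K]

theorem exists_single_one_notMem [Finite ι] [DecidableEq ι] {V : Submodule K (ι → K)}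
    (hV : V ≠ ⊤) : ∃ j, Pi.single j 1 ∉ V := by
  contrapose! hV
  rw [eq_top_iff, ← (Pi.basisFun K ι).span_eq, Submodule.span_le]
  rintro _ ⟨j, rfl⟩
  rw [Pi.basisFun_apply]
  exact hV j

theorem exists_not_le_ker_proj {V : Submodule K (ι → K)} (hV : V ≠ ⊥) :
    ∃ j, ¬ V ≤ LinearMap.ker (LinearMap.proj j : (ι → K) →ₗ[K] K) := by
  contrapose! hV
  exact eq_bot_iff.2 fun v hv => funext fun j => hV j hv

end Coordinates

theorem finrank_inf_ker_add_one {K E : Type*} [Field K] [AddCommGroup E] [Module K E]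
    [Module.Finite K E] {V : Submodule K E} {f : E →ₗ[K] K} (hf : ¬ V ≤ LinearMap.ker f) :
    Module.finrank K ↥(V ⊓ LinearMap.ker f) + 1 = Module.finrank K V := by
  have h_ne : f.domRestrict V ≠ 0 := fun h => hf fun v hv => LinearMap.congr_fun h ⟨v, hv⟩
  have h_map : V ⊓ LinearMap.ker f = (LinearMap.ker (f.domRestrict V)).map V.subtype := by
    rw [LinearMap.ker_domRestrict, Submodule.map_comap_subtype]
  rw [h_map, Submodule.finrank_map_subtype_eq]
  exact Module.Dual.finrank_ker_add_one_of_ne_zero h_ne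

section IsGalClosed

variable {q n : ℕ} {K : Type*} [Field K] {V W : Submodule K (Fin n → K)}

theorem IsGalClosed.inf_ker_proj (hq : q ≠ 0) (hV : IsGalClosed q V) (j : Fin n) :
    IsGalClosed q (V ⊓ LinearMap.ker (LinearMap.proj j : (Fin n → K) →ₗ[K] K)) := by
  set H := LinearMap.ker (LinearMap.proj j : (Fin n → K) →ₗ[K] K)
  have h_preimage : (H : Set (Fin n → K)) = (fun v i => v i ^ q) ⁻¹' H := by
    ext v
    exact (pow_eq_zero_iff hq).symm
  unfold IsGalClosed at hV ⊢
  rw [Submodule.coe_inf]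
  nth_rw 1 [h_preimage]
  rw [Set.image_inter_preimage, hV]

theorem IsGalClosed.exists_le_finrank_add_one_eq (hq : q ≠ 0) (hV : IsGalClosed q V)
    (h_ne : V ≠ ⊥) :
    ∃ W, IsGalClosed q W ∧ W ≤ V ∧ Module.finrank K W + 1 = Module.finrank K V := by
  obtain ⟨j, hj⟩ := exists_not_le_ker_proj h_ne
  exact ⟨_, hV.inf_ker_proj hq j, inf_le_left, finrank_inf_ker_add_one hj⟩

variable {σ : K ≃+* K} (hσ : ∀ x, σ x = x ^ q)

include hσ

theorem isGalClosed_iff_image_compLeft :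
    IsGalClosed q V ↔ (σ : K →+* K).compLeft (Fin n) '' V = (V : Set (Fin n → K)) := by
  have h_fun : ⇑((σ : K →+* K).compLeft (Fin n)) = fun v i => v i ^ q :=
    funext fun v => funext fun i => hσ (v i)
  rw [h_fun, IsGalClosed]

theorem isGalClosed_top : IsGalClosed q (⊤ : Submodule K (Fin n → K)) := by
  rw [isGalClosed_iff_image_compLeft hσ, Submodule.top_coe, Set.image_univ]
  exact σ.surjective.comp_left.range_eq

theorem isGalClosed_span_single_one (j : Fin n) :
    IsGalClosed q (Submodule.span K {(Pi.single j 1 : Fin n → K)}) := by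
  have h_comm : (σ : K →+* K).compLeft (Fin n) ∘ LinearMap.toSpanSingleton K (Fin n → K)
      (Pi.single j 1) = LinearMap.toSpanSingleton K (Fin n → K) (Pi.single j 1) ∘ σ := by
    ext c i
    rcases eq_or_ne i j with rfl | hij
    · simp
    · simp [hij]
  rw [isGalClosed_iff_image_compLeft hσ, LinearMap.span_singleton_eq_range, LinearMap.coe_range,
    ← Set.range_comp, h_comm, σ.surjective.range_comp]

theorem IsGalClosed.sup (hV : IsGalClosed q V) (hW : IsGalClosed q W) :
    IsGalClosed q (V ⊔ W) := by
  rw [isGalClosed_iff_image_compLeft hσ] at *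
  rw [Submodule.coe_sup, Set.image_add, hV, hW]

theorem IsGalClosed.exists_ge_finrank_eq_add_one (hV : IsGalClosed q V) (h_ne : V ≠ ⊤) :
    ∃ W, IsGalClosed q W ∧ V ≤ W ∧ Module.finrank K W = Module.finrank K V + 1 := by
  obtain ⟨j, hj⟩ := exists_single_one_notMem h_ne
  exact ⟨_, hV.sup hσ (isGalClosed_span_single_one hσ j), le_sup_left,
    Submodule.finrank_sup_span_singleton hj⟩

end IsGalClosed

section RDIP

variable {q n : ℕ} {K : Type*} [Field K] {C1 C2 : Submodule K (Fin n → K)}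

theorem RDIP_le_iff {i d : ℕ} :
    RDIP q C1 C2 i ≤ d ↔
      ∀ V, IsGalClosed q V → Module.finrank K V = i → relInterDim C1 C2 V ≤ d := by
  have h_bdd : BddAbove {d : ℕ | ∃ V, IsGalClosed q V ∧ Module.finrank K V = i ∧
      d = relInterDim C1 C2 V} := by
    refine ⟨Module.finrank K C1, ?_⟩
    rintro _ ⟨V, -, -, rfl⟩
    exact relInterDim_le_finrank_left C1 C2 V
  refine (csSup_le_iff' h_bdd).trans ⟨fun h V hV hi => h _ ⟨V, hV, hi, rfl⟩, ?_⟩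
  rintro h _ ⟨V, hV, hi, rfl⟩
  exact h V hV hi

theorem relInterDim_le_RDIP {V : Submodule K (Fin n → K)} (hV : IsGalClosed q V) :
    relInterDim C1 C2 V ≤ RDIP q C1 C2 (Module.finrank K V) :=
  RDIP_le_iff.1 le_rfl V hV rfl

theorem RDIP_zero : RDIP q C1 C2 0 = 0 :=
  Nat.le_zero.1 <| RDIP_le_iff.2 fun V _ hV => hV ▸ relInterDim_le_finrank_right C1 C2 V

theorem RDIP_add_one_le (hq : q ≠ 0) (i : ℕ) : RDIP q C1 C2 (i + 1) ≤ RDIP q C1 C2 i + 1 := by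
  refine RDIP_le_iff.2 fun V hV hVi => ?_
  have h_ne : V ≠ ⊥ := by
    rintro rfl
    simp at hVi
  obtain ⟨W, hW, hWV, h_finrank⟩ := hV.exists_le_finrank_add_one_eq hq h_ne
  obtain rfl : Module.finrank K W = i := by omega
  have h_step := relInterDim_add_finrank_le C1 C2 hWV
  have h_W : relInterDim C1 C2 W ≤ RDIP q C1 C2 (Module.finrank K W) := relInterDim_le_RDIP hW
  omega

variable {σ : K ≃+* K} (hσ : ∀ x, σ x = x ^ q)

include hσ

theorem RDIP_length : RDIP q C1 C2 n = Module.finrank K C1 - Module.finrank K C2 := by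
  rw [← relInterDim_top]
  apply le_antisymm
  · refine RDIP_le_iff.2 fun V _ hV => ?_
    rw [Submodule.eq_top_of_finrank_eq (hV.trans (Module.finrank_fin_fun K).symm)]
  · simpa only [finrank_top, Module.finrank_fin_fun] using
      relInterDim_le_RDIP (C1 := C1) (C2 := C2) (isGalClosed_top hσ (n := n))

theorem RDIP_le_RDIP_add_one (h : C2 ≤ C1) {i : ℕ} (hi : i < n) :
    RDIP q C1 C2 i ≤ RDIP q C1 C2 (i + 1) := by
  refine RDIP_le_iff.2 fun V hV hVi => ?_
  have h_ne : V ≠ ⊤ := by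
    rintro rfl
    rw [finrank_top, Module.finrank_fin_fun] at hVi
    exact hi.ne' hVi
  obtain ⟨W, hW, hVW, h_finrank⟩ := hV.exists_ge_finrank_eq_add_one hσ h_ne
  calc relInterDim C1 C2 V ≤ relInterDim C1 C2 W := relInterDim_mono h hVW
    _ ≤ RDIP q C1 C2 (Module.finrank K W) := relInterDim_le_RDIP hW
    _ = RDIP q C1 C2 (i + 1) := by rw [h_finrank, hVi]

theorem monotoneOn_RDIP (h : C2 ≤ C1) : MonotoneOn (RDIP q C1 C2) (Set.Iic n) :=
  monotoneOn_of_le_add_one Set.ordConnected_Iic fun _ _ _ hi => RDIP_le_RDIP_add_one hσ h hi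

end RDIP

theorem stmt1_general {q n : ℕ} {K : Type*} [Field K] {σ : K ≃+* K} (hσ : ∀ x, σ x = x ^ q)
    {C1 C2 : Submodule K (Fin n → K)} (h : C2 ≤ C1) :
    RDIP q C1 C2 0 = 0 ∧
    RDIP q C1 C2 n = Module.finrank K C1 - Module.finrank K C2 ∧
    (∀ i j, i ≤ j → j ≤ n → RDIP q C1 C2 i ≤ RDIP q C1 C2 j) ∧
    (∀ i, i + 1 ≤ n → RDIP q C1 C2 (i + 1) ≤ RDIP q C1 C2 i + 1) := by
  have hq : q ≠ 0 := by
    rintro rfl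
    simpa using hσ 0
  exact ⟨RDIP_zero, RDIP_length hσ,
    fun _ _ hij hj => monotoneOn_RDIP hσ h (hij.trans hj) hj hij, fun i _ => RDIP_add_one_le hq i⟩

/-- Monotonicity of the RDIP: `K_{R,0}(C1,C2) = 0`,
`K_{R,n}(C1,C2) = dim C1 - dim C2`, `K_{R,i}` is nondecreasing in `i` on `[0,n]`,
and consecutive increments are at most `1`. -/
theorem stmt1 (m n : ℕ) [Fintype Fq] [Fintype Fqm]
    (hq : Fintype.card Fq = q) (hm : Module.finrank Fq Fqm = m)
    (C1 C2 : Submodule Fqm (Fin n → Fqm)) (h12 : C2 < C1) :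
    RDIP q C1 C2 0 = 0 ∧
    RDIP q C1 C2 n = Module.finrank Fqm ↥C1 - Module.finrank Fqm ↥C2 ∧
    (∀ i j, i ≤ j → j ≤ n → RDIP q C1 C2 i ≤ RDIP q C1 C2 j) ∧
    (∀ i, i + 1 ≤ n → RDIP q C1 C2 (i + 1) ≤ RDIP q C1 C2 i + 1) := by
  exact stmt1_general (σ := (FiniteField.frobeniusAlgEquivOfAlgebraic Fq Fqm).toRingEquiv)
    (fun _ => hq ▸ rfl) h12.le

end
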